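/- Let m ≥ 0 be an integer, let d > 1 be an integer, and let L = L_{2d}^{(m)} = 2U ⊕ mE8(−1) ⊕ ⟨−2d⟩. Then the number of orbits of the stable orthogonal group Õ(L) on the set of primitive vectors r ∈ L with (r,r) = −2d and div(r) = d equals 2^{ρ(d)} if d is odd or d ≡ 4 (mod 8), equals 2^{ρ(d)+1} if d ≡ 0 (mod 8), and equals 2^{ρ(d)−1} if d ≡ 2 (mod 4), where ρ(d) is the number of distinct prime divisors of d. -/

import Mathlib

/-- The hyperbolic plane `U`, with Gram matrix `[[0,1],[1,0]]`. -/
def gramU : Matrix (Fin 2) (Fin 2) ℤ := !![0, 1; 1, 0]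

/-- The Gram matrix of `E₈(−1)`: the negated Cartan (= Gram) matrix of the `E₈` root
lattice. -/
def gramE8neg : Matrix (Fin 8) (Fin 8) ℤ := -CartanMatrix.E₈

/-- The Gram matrix of `m` orthogonal copies of `E₈(−1)`. -/
def gramE8copies (m : ℕ) : Matrix (Fin m × Fin 8) (Fin m × Fin 8) ℤ :=
  Matrix.of fun p q => if p.1 = q.1 then gramE8neg p.2 q.2 else 0

/-- Index set for `II_{2,8m+2} = 2U ⊕ mE₈(−1)`. -/
abbrev IdxII (m : ℕ) : Type := (Fin 2 ⊕ Fin 2) ⊕ Fin m × Fin 8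

/-- The Gram matrix of the even unimodular lattice `II_{2,8m+2} = 2U ⊕ mE₈(−1)`. -/
def gramII (m : ℕ) : Matrix (IdxII m) (IdxII m) ℤ :=
  Matrix.fromBlocks (Matrix.fromBlocks gramU 0 0 gramU) 0 0 (gramE8copies m)

/-- Index set for `L_{2d}^{(m)} = 2U ⊕ mE₈(−1) ⊕ ⟨−2d⟩`. -/
abbrev IdxL (m : ℕ) : Type := IdxII m ⊕ Fin 1

/-- The Gram matrix of `L_{2d}^{(m)} = 2U ⊕ mE₈(−1) ⊕ ⟨−2d⟩`. -/
def gramL (m d : ℕ) : Matrix (IdxL m) (IdxL m) ℤ :=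
  Matrix.fromBlocks (gramII m) 0 0 !![-(2 * (d : ℤ))]

/-- The bilinear form on `ι → ℤ` associated to a Gram matrix `G`:
`⟨x, y⟩ = ∑ i j, x i * G i j * y j`. -/
def bilin {ι : Type} [Fintype ι] (G : Matrix ι ι ℤ) (x y : ι → ℤ) : ℤ :=
  ∑ i, ∑ j, x i * G i j * y j

/-- `r` is primitive: `ℚr ∩ L = ℤr`, equivalently `r` is not a nontrivial integer
multiple of a lattice vector. -/
def IsPrim {ι : Type} (r : ι → ℤ) : Prop :=
  ∀ (k : ℤ) (x : ι → ℤ), r = k • x → IsUnit k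

/-- `s = div(r)`: the positive generator of the ideal `{(r,l) : l ∈ L} ⊆ ℤ`. -/
def IsDivisorOf {ι : Type} [Fintype ι] (G : Matrix ι ι ℤ) (r : ι → ℤ) (s : ℤ) : Prop :=
  0 < s ∧ (∀ l : ι → ℤ, s ∣ bilin G r l) ∧ ∃ l : ι → ℤ, bilin G r l = s

/-- Two lattices, given as `ℤ`-modules with `ℤ`-valued bilinear forms, are isometric. -/
def LatIsometric {M N : Type} [AddCommGroup M] [Module ℤ M] [AddCommGroup N] [Module ℤ N]
    (BM : M → M → ℤ) (BN : N → N → ℤ) : Prop :=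
  ∃ e : M ≃ₗ[ℤ] N, ∀ x y : M, BN (e x) (e y) = BM x y

/-- The orthogonal complement `K_r = {x : (x,r) = 0}` of `r`, as a `ℤ`-submodule. -/
def orthC {ι : Type} [Fintype ι] (G : Matrix ι ι ℤ) (r : ι → ℤ) :
    Submodule ℤ (ι → ℤ) where
  carrier := {x | bilin G x r = 0}
  zero_mem' := by simp [bilin]
  add_mem' := by
    intro a b ha hb
    simp only [Set.mem_setOf_eq, bilin, Pi.add_apply, add_mul, Finset.sum_add_distrib] at *
    rw [ha, hb, add_zero]
  smul_mem' := by
    intro c x hx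
    simp only [Set.mem_setOf_eq, bilin, Pi.smul_apply, smul_eq_mul, mul_assoc,
      ← Finset.mul_sum] at *
    rw [hx, mul_zero]

/-- Componentwise embedding of the lattice `ι → ℤ` into `ι → ℚ` (i.e. into `L ⊗ ℚ`). -/
def castV {ι : Type} (x : ι → ℤ) : ι → ℚ := fun i => (x i : ℚ)

/-- The `ℚ`-bilinear extension of the form with Gram matrix `G` to `ι → ℚ`. -/
def bilinQ {ι : Type} [Fintype ι] (G : Matrix ι ι ℤ) (x y : ι → ℚ) : ℚ :=
  ∑ i, ∑ j, x i * (G i j : ℚ) * y j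

/-- `g` lies in the stable orthogonal group `Õ(L)` of the lattice `L = (ι → ℤ)` with
Gram matrix `G`:  `g` is an isometry of `L` whose `ℚ`-linear extension `g_ℚ` satisfies
`g_ℚ(y) − y ∈ L` for every `y` in the dual lattice `L^∨ ⊆ L ⊗ ℚ`.  (The condition
`g_ℚ(y) − y ∈ L` is expressed by clearing denominators: whenever `N • y = x` comes from
`x ∈ L`, one has `g x − x ∈ N • L`.) -/
def InStableO {ι : Type} [Fintype ι] (G : Matrix ι ι ℤ)
    (g : (ι → ℤ) ≃ₗ[ℤ] (ι → ℤ)) : Prop :=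
  (∀ x y, bilin G (g x) (g y) = bilin G x y) ∧
    ∀ y : ι → ℚ, (∀ l : ι → ℤ, ∃ a : ℤ, bilinQ G y (castV l) = (a : ℚ)) →
      ∀ (N : ℤ) (x : ι → ℤ), (N : ℚ) • y = castV x → ∃ l : ι → ℤ, g x - x = N • l

/-- The set of orbits of the stable orthogonal group `Õ(L)` on a set `S` of lattice
vectors. -/
def stableOrbits {ι : Type} [Fintype ι] (G : Matrix ι ι ℤ) (S : Set (ι → ℤ)) :
    Set (Set (ι → ℤ)) :=
  {O | ∃ r ∈ S, O = {r' | ∃ g : (ι → ℤ) ≃ₗ[ℤ] (ι → ℤ), InStableO G g ∧ g r = r'}}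

/-! Every vector `r` of divisor `d` is moved by Eichler transvections along two orthogonal
hyperbolic planes to one with `(r, e₁) = d`, a Euclidean algorithm on the pairings of `r` with
isotropic vectors. One more transvection then shows that the norm of `r` and its class modulo `dL`
determine its stable orbit (Eichler's criterion). When `L = K ⊕ ℤh` with `K` unimodular and
`(h, h) = -2d`, divisor `d` forces `r ≡ c h` modulo `dL`, and norm `-2d` means `c² = 1` in `ℤ/d`.
Every square root of `1` is realised, so the orbits are counted by these
square roots. -/

open LinearMap (BilinForm)
open scoped Pointwise

section EvenForm

variable {V : Type*} [AddCommGroup V]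

theorem smodEq_smul_top_iff {N : ℤ} {x y : V} :
    x ≡ y [SMOD (N • ⊤ : Submodule ℤ V)] ↔ ∃ v, x = y + N • v := by
  simp only [SModEq.sub_mem, Submodule.mem_smul_pointwise_iff_exists, Submodule.mem_top, true_and,
    eq_sub_iff_add_eq', eq_comm]

/-- A symmetric integral bilinear form taking even values on the diagonal, that is, the form of an
even lattice; nondegeneracy is not part of the notion. -/
structure IsEvenForm (B : BilinForm ℤ V) : Prop where
  symm : B.IsSymm
  even : ∀ x, Even (B x x)

variable {B : BilinForm ℤ V}

theorem IsEvenForm.comm (hB : IsEvenForm B) (x y : V) : B x y = B y x :=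
  hB.symm.eq x y

theorem IsEvenForm.two_mul_half (hB : IsEvenForm B) (x : V) : 2 * (B x x / 2) = B x x :=
  Int.two_mul_ediv_two_of_even (hB.even x)

/-- `k` generates the ideal of values `B r l`; the positive such `k` is `div(r)`. -/
structure IsDivisor (B : BilinForm ℤ V) (r : V) (k : ℤ) : Prop where
  dvd : ∀ l, k ∣ B r l
  exists_eq : ∃ l, B r l = k

/-- The isometries acting trivially on the discriminant group. An element of the dual lattice is
written `x / N` with `N ≠ 0` dividing all `B x l`, so that no extension of scalars is needed. -/
def stableOrthogonalGroup (B : BilinForm ℤ V) : Subgroup (V ≃ₗ[ℤ] V) where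
  carrier := {g | (∀ x y, B (g x) (g y) = B x y) ∧
    ∀ (N : ℤ) (x : V), N ≠ 0 → (∀ l, N ∣ B x l) → g x ≡ x [SMOD (N • ⊤ : Submodule ℤ V)]}
  one_mem' := ⟨fun _ _ => rfl, fun _ _ _ _ => SModEq.rfl⟩
  mul_mem' := by
    rintro g h ⟨hg, hgN⟩ ⟨hh, hhN⟩
    refine ⟨fun x y => (hg _ _).trans (hh x y), fun N x hN hx => ?_⟩
    refine (hgN N (h x) hN fun l => ?_).trans (hhN N x hN hx)
    rw [← h.apply_symm_apply l, hh]
    exact hx _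
  inv_mem' := by
    rintro g ⟨hg, hgN⟩
    have hinv : ∀ x y, B (g⁻¹ x) (g⁻¹ y) = B x y := fun x y => by
      rw [← hg, ← LinearEquiv.mul_apply, ← LinearEquiv.mul_apply, mul_inv_cancel]; rfl
    refine ⟨hinv, fun N x hN hx => ?_⟩
    have hg_inv := hgN N (g⁻¹ x) hN fun l => by
      rw [← g.symm_apply_apply l]
      exact (hinv x (g l)).symm ▸ hx (g l)
    rw [← LinearEquiv.mul_apply, mul_inv_cancel] at hg_inv
    exact hg_inv.symm

/-- The orbit of `r` under the stable orthogonal group of `B`. -/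
abbrev stableOrbit (B : BilinForm ℤ V) (r : V) : Set V :=
  MulAction.orbit (stableOrthogonalGroup B) r

theorem stableOrbit_eq_iff {r s : V} :
    stableOrbit B r = stableOrbit B s ↔ r ∈ stableOrbit B s :=
  MulAction.orbit_eq_iff

theorem mem_stableOrbit_trans {r s t : V} (hs : s ∈ stableOrbit B r) (ht : t ∈ stableOrbit B s) :
    t ∈ stableOrbit B r :=
  stableOrbit_eq_iff.2 hs ▸ ht

theorem norm_eq_of_mem_stableOrbit {r s : V} (h : s ∈ stableOrbit B r) : B s s = B r r := by
  obtain ⟨g, rfl⟩ := h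
  exact g.2.1 r r

theorem IsDivisor.of_mem_stableOrbit {r s : V} {k : ℤ} (hr : IsDivisor B r k)
    (h : s ∈ stableOrbit B r) : IsDivisor B s k := by
  obtain ⟨g, rfl⟩ := h
  have hg : ∀ l, B (g.1 r) (g.1 l) = B r l := g.2.1 r
  obtain ⟨l, hl⟩ := hr.exists_eq
  refine ⟨fun l => ?_, g.1 l, (hg l).trans hl⟩
  rw [← g.1.apply_symm_apply l]
  exact (hg _).symm ▸ hr.dvd _

theorem IsDivisor.smodEq_of_mem_stableOrbit {r s : V} {k : ℤ} (hr : IsDivisor B r k) (hk : k ≠ 0)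
    (h : s ∈ stableOrbit B r) : s ≡ r [SMOD (k • ⊤ : Submodule ℤ V)] := by
  obtain ⟨g, rfl⟩ := h
  exact g.2.2 k r hk hr.dvd

/-- The Eichler transvection `x ↦ x - (a, x) e + (e, x) a - (a, a) / 2 (e, x) e`; the integer
division is exact for even forms. -/
def eichlerMap (B : BilinForm ℤ V) (e a : V) : V →ₗ[ℤ] V :=
  LinearMap.id - (B a).smulRight e + (B e).smulRight (a - (B a a / 2) • e)

theorem eichlerMap_apply (e a x : V) :
    eichlerMap B e a x = x - B a x • e + B e x • (a - (B a a / 2) • e) :=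
  rfl

section Eichler

variable (hB : IsEvenForm B) {e a : V} (he : B e e = 0) (hea : B e a = 0)
include hB he hea

theorem eichlerMap_isometry (x y : V) :
    B (eichlerMap B e a x) (eichlerMap B e a y) = B x y := by
  simp only [eichlerMap_apply, map_add, map_sub, map_smul, LinearMap.add_apply,
    LinearMap.sub_apply, LinearMap.smul_apply, smul_eq_mul, he, hea, hB.comm a e, hB.comm x e,
    hB.comm x a]
  linear_combination - B e x * B e y * hB.two_mul_half a

theorem eichlerMap_neg_eichlerMap (x : V) :
    eichlerMap B e (-a) (eichlerMap B e a x) = x := by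
  simp only [eichlerMap_apply, map_add, map_sub, map_smul, map_neg, LinearMap.neg_apply, neg_neg,
    he, hea, hB.comm a e]
  linear_combination (norm := module) (-B e x * hB.two_mul_half a) • e

theorem eichlerMap_mem_stableOrbit (x : V) : eichlerMap B e a x ∈ stableOrbit B x := by
  have hea' : B e (-a) = 0 := by rw [map_neg, hea, neg_zero]
  let g : V ≃ₗ[ℤ] V := LinearEquiv.ofLinearMap (eichlerMap B e a) (eichlerMap B e (-a))
    (LinearMap.ext fun x => by simpa using eichlerMap_neg_eichlerMap hB he hea' x)
    (LinearMap.ext fun x => eichlerMap_neg_eichlerMap hB he hea x)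
  refine ⟨⟨g, eichlerMap_isometry hB he hea, fun N x _ hx => ?_⟩, rfl⟩
  obtain ⟨u, hu⟩ := hx a
  obtain ⟨v, hv⟩ := hx e
  refine smodEq_smul_top_iff.2 ⟨v • (a - (B a a / 2) • e) - u • e, ?_⟩
  change eichlerMap B e a x = _
  rw [eichlerMap_apply, hB.comm a, hB.comm e, hu, hv]
  module

end Eichler

end EvenForm

section Reduction

variable {V : Type*} [AddCommGroup V] {B : BilinForm ℤ V}

/-- Two isotropic vectors spanning a hyperbolic plane. -/
structure IsHyperbolicPair (B : BilinForm ℤ V) (e f : V) : Prop where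
  left_isotropic : B e e = 0
  right_isotropic : B f f = 0
  pairing : B e f = 1

/-- Two hyperbolic pairs spanning orthogonal planes, that is, an embedding of `2U`. -/
structure IsTwoHyperbolicPlanes (B : BilinForm ℤ V) (e₁ f₁ e₂ f₂ : V) : Prop where
  first : IsHyperbolicPair B e₁ f₁
  second : IsHyperbolicPair B e₂ f₂
  e₁_e₂ : B e₁ e₂ = 0
  e₁_f₂ : B e₁ f₂ = 0
  f₁_e₂ : B f₁ e₂ = 0
  f₁_f₂ : B f₁ f₂ = 0

/-- The positive pairing of `s` with `e` is smallest among those of its stable orbit. -/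
structure IsMinimalPairing (B : BilinForm ℤ V) (s e : V) : Prop where
  pos : 0 < B s e
  le : ∀ t ∈ stableOrbit B s, 0 < B t e → B s e ≤ B t e

theorem IsMinimalPairing.of_mem_stableOrbit {s t e : V} (h : IsMinimalPairing B s e)
    (ht : t ∈ stableOrbit B s) (hte : B t e = B s e) : IsMinimalPairing B t e :=
  ⟨hte ▸ h.pos, fun u hu hpos => hte ▸ h.le u (mem_stableOrbit_trans ht hu) hpos⟩

theorem exists_mem_stableOrbit_isMinimalPairing {r e : V} (h : ∃ s ∈ stableOrbit B r, 0 < B s e) :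
    ∃ s ∈ stableOrbit B r, IsMinimalPairing B s e := by
  obtain ⟨n, ⟨s, hs, hpos, rfl⟩, hmin⟩ := Int.exists_least_of_bdd
    (P := fun n => ∃ s ∈ stableOrbit B r, 0 < B s e ∧ B s e = n)
    ⟨0, fun _ ⟨_, _, hpos, hn⟩ => hn ▸ hpos.le⟩
    (let ⟨s, hs, hpos⟩ := h; ⟨_, s, hs, hpos, rfl⟩)
  exact ⟨s, hs, hpos, fun t ht htpos => hmin _ ⟨t, mem_stableOrbit_trans hs ht, htpos, rfl⟩⟩

theorem IsDivisor.unique {r : V} {k n : ℤ} (hk : IsDivisor B r k) (hn : IsDivisor B r n)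
    (hk0 : 0 ≤ k) (hn0 : 0 ≤ n) : k = n := by
  obtain ⟨l, hl⟩ := hk.exists_eq
  obtain ⟨l', hl'⟩ := hn.exists_eq
  exact Int.dvd_antisymm hk0 hn0 (hl' ▸ hk.dvd l') (hl ▸ hn.dvd l)

theorem IsHyperbolicPair.swap (hB : IsEvenForm B) {e f : V} (h : IsHyperbolicPair B e f) :
    IsHyperbolicPair B f e :=
  ⟨h.right_isotropic, h.left_isotropic, hB.comm e f ▸ h.pairing⟩

theorem eichlerMap_pairing (hB : IsEvenForm B) (e a s x : V) :
    B (eichlerMap B e a s) x =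
      B s x - B s a * B e x + B s e * (B a x - B a a / 2 * B e x) := by
  simp only [eichlerMap_apply, map_add, map_sub, map_smul, LinearMap.add_apply,
    LinearMap.sub_apply, LinearMap.smul_apply, smul_eq_mul, hB.comm a s, hB.comm e s]

variable (hB : IsEvenForm B) {e₁ f₁ e₂ f₂ : V}
include hB

namespace IsTwoHyperbolicPlanes

theorem swap_planes (h : IsTwoHyperbolicPlanes B e₁ f₁ e₂ f₂) :
    IsTwoHyperbolicPlanes B e₂ f₂ e₁ f₁ :=
  ⟨h.second, h.first, hB.comm e₁ e₂ ▸ h.e₁_e₂, hB.comm f₁ e₂ ▸ h.f₁_e₂, hB.comm e₁ f₂ ▸ h.e₁_f₂,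
    hB.comm f₁ f₂ ▸ h.f₁_f₂⟩

theorem swap_second (h : IsTwoHyperbolicPlanes B e₁ f₁ e₂ f₂) :
    IsTwoHyperbolicPlanes B e₁ f₁ f₂ e₂ :=
  ⟨h.first, h.second.swap hB, h.e₁_f₂, h.e₁_e₂, h.f₁_f₂, h.f₁_e₂⟩

variable (h : IsTwoHyperbolicPlanes B e₁ f₁ e₂ f₂)
include h

theorem exists_mem_stableOrbit_sub_mul (s : V) (k : ℤ) :
    ∃ t ∈ stableOrbit B s,
      B t e₁ = B s e₁ - k * B s e₂ ∧ B t e₂ = B s e₂ ∧ B t f₁ = B s f₁ := by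
  have hperp : B f₁ (k • e₂) = 0 := by rw [map_smul, h.f₁_e₂, smul_zero]
  refine ⟨_, eichlerMap_mem_stableOrbit hB h.first.right_isotropic hperp s, ?_⟩
  simp only [eichlerMap_pairing hB, map_smul, LinearMap.smul_apply, smul_eq_mul,
    h.first.right_isotropic, h.second.left_isotropic, h.f₁_e₂, (h.first.swap hB).pairing,
    (h.swap_planes hB).e₁_e₂, (h.swap_planes hB).e₁_f₂]
  norm_num

theorem exists_mem_stableOrbit_sub_pairing {s : V} (hs : B s f₂ = 0) (l : V) :
    ∃ t ∈ stableOrbit B s, B t e₁ = B s e₁ ∧ B t e₂ = B s e₂ - (B s l - B f₂ l * B s e₂) := by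
  have hf₂e₂ := (h.second.swap hB).pairing
  have hperp : B f₂ (l - B f₂ l • e₂) = 0 := by
    rw [map_sub, map_smul, hf₂e₂, smul_eq_mul, mul_one, sub_self]
  refine ⟨_, eichlerMap_mem_stableOrbit hB h.second.right_isotropic hperp s, ?_⟩
  simp only [eichlerMap_pairing hB, hs, map_sub, map_smul, smul_eq_mul, hf₂e₂,
    (h.swap_planes hB).f₁_e₂]
  norm_num

theorem exists_mem_stableOrbit_pos_le {s : V} (hs : B s e₂ ≠ 0) :
    ∃ t ∈ stableOrbit B s, 0 < B t e₁ ∧ B t e₁ ≤ |B s e₂| := by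
  obtain ⟨k, ⟨hpos, hle⟩, -⟩ := existsUnique_sub_zsmul_mem_Ioc (abs_pos.2 hs) (B s e₁) 0
  obtain ⟨t, ht, hte, -⟩ := h.exists_mem_stableOrbit_sub_mul hB s (k * (B s e₂).sign)
  rw [mul_assoc, Int.sign_mul_self_eq_abs] at hte
  rw [zero_add] at hle
  exact ⟨t, ht, hte ▸ hpos, hte ▸ hle⟩

theorem exists_mem_stableOrbit_pos {s l : V} (hl : B s l ≠ 0) :
    ∃ t ∈ stableOrbit B s, 0 < B t e₁ := by
  by_cases hf : B s f₂ = 0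
  · by_cases he : B s e₂ = 0
    · obtain ⟨t, ht, -, hte⟩ := h.exists_mem_stableOrbit_sub_pairing hB hf l
      rw [he, mul_zero, sub_zero, zero_sub] at hte
      obtain ⟨u, hu, hpos, -⟩ :=
        h.exists_mem_stableOrbit_pos_le hB (hte ▸ neg_ne_zero.2 hl)
      exact ⟨u, mem_stableOrbit_trans ht hu, hpos⟩
    · exact (h.exists_mem_stableOrbit_pos_le hB he).imp fun t => And.imp_right And.left
  · exact ((h.swap_second hB).exists_mem_stableOrbit_pos_le hB hf).imp fun t =>
      And.imp_right And.left

theorem dvd_of_isMinimalPairing {s : V} (hs : IsMinimalPairing B s e₁) : B s e₁ ∣ B s e₂ := by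
  -- Otherwise one transvection reduces the pairing with `e₂` to its remainder modulo `B s e₁`, and
  -- a second one moves a positive pairing of at most that size to `e₁`, against minimality.
  obtain ⟨t, ht, hte₂, hte₁, -⟩ :=
    (h.swap_planes hB).exists_mem_stableOrbit_sub_mul hB s (B s e₂ / B s e₁)
  rw [mul_comm, ← Int.emod_def] at hte₂
  by_contra hndvd
  have hne : B t e₂ ≠ 0 := fun h0 => hndvd (Int.dvd_of_emod_eq_zero (hte₂ ▸ h0))
  obtain ⟨u, hu, hpos, hle⟩ := h.exists_mem_stableOrbit_pos_le hB hne
  rw [hte₂, abs_of_nonneg (Int.emod_nonneg _ hs.pos.ne')] at hle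
  exact absurd (hs.le u (mem_stableOrbit_trans ht hu) hpos)
    (hle.trans_lt (Int.emod_lt_of_pos _ hs.pos)).not_ge

theorem dvd_apply_of_isMinimalPairing {s : V} (hs : IsMinimalPairing B s e₁) (hf : B s f₂ = 0)
    (l : V) : B s e₁ ∣ B s l := by
  obtain ⟨t, ht, hte₁, hte₂⟩ := h.exists_mem_stableOrbit_sub_pairing hB hf l
  have hs_dvd : B s e₁ ∣ B s e₂ := h.dvd_of_isMinimalPairing hB hs
  have ht_dvd : B t e₁ ∣ B t e₂ :=
    h.dvd_of_isMinimalPairing hB (hs.of_mem_stableOrbit ht hte₁)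
  rw [hte₁, hte₂, dvd_sub_right hs_dvd] at ht_dvd
  exact (dvd_sub_left (hs_dvd.mul_left _)).1 ht_dvd

theorem exists_mem_stableOrbit_pairing_eq {r : V} {k : ℤ} (hr : IsDivisor B r k) (hk : 0 < k) :
    ∃ s ∈ stableOrbit B r, B s e₁ = k := by
  obtain ⟨l, hl⟩ := hr.exists_eq
  obtain ⟨s, hs, hmin⟩ := exists_mem_stableOrbit_isMinimalPairing
    (h.exists_mem_stableOrbit_pos hB (hl.trans_ne hk.ne'))
  obtain ⟨q, hq⟩ := (h.swap_second hB).dvd_of_isMinimalPairing hB hmin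
  obtain ⟨t, ht, htf₂, hte₁, -⟩ :=
    ((h.swap_second hB).swap_planes hB).exists_mem_stableOrbit_sub_mul hB s q
  rw [hq, mul_comm, sub_self] at htf₂
  have hdiv : IsDivisor B t (B t e₁) :=
    ⟨h.dvd_apply_of_isMinimalPairing hB (hmin.of_mem_stableOrbit ht hte₁) htf₂, e₁, rfl⟩
  have hrt : t ∈ stableOrbit B r := mem_stableOrbit_trans hs ht
  exact ⟨t, hrt, hdiv.unique (hr.of_mem_stableOrbit hrt) (hte₁ ▸ hmin.pos.le) hk.le⟩

end IsTwoHyperbolicPlanes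

theorem mem_stableOrbit_of_pairing_eq {e r s : V} {k : ℤ} (he : B e e = 0) (hk : k ≠ 0)
    (hre : B r e = k) (hse : B s e = k) (hnorm : B r r = B s s)
    (hmod : r ≡ s [SMOD (k • ⊤ : Submodule ℤ V)]) : r ∈ stableOrbit B s := by
  obtain ⟨a, rfl⟩ := smodEq_smul_top_iff.1 hmod
  have hea : B e a = 0 := by
    rw [map_add, map_smul, LinearMap.add_apply, LinearMap.smul_apply, hse, smul_eq_mul,
      add_eq_left, mul_eq_zero, or_iff_right hk] at hre
    rw [hB.comm, hre]
  have hcoeff : B a s + k * (B a a / 2) = 0 := by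
    simp only [map_add, map_smul, LinearMap.add_apply, LinearMap.smul_apply, smul_eq_mul,
      hB.comm s a] at hnorm
    refine mul_left_cancel₀ (mul_ne_zero two_ne_zero hk) ?_
    linear_combination hnorm + k ^ 2 * hB.two_mul_half a
  convert eichlerMap_mem_stableOrbit hB he hea s using 1
  rw [eichlerMap_apply, hB.comm e s, hse]
  linear_combination (norm := module) hcoeff • e

theorem IsTwoHyperbolicPlanes.eichler_criterion (h : IsTwoHyperbolicPlanes B e₁ f₁ e₂ f₂)
    {r s : V} {k : ℤ} (hk : 0 < k) (hr : IsDivisor B r k) (hs : IsDivisor B s k)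
    (hnorm : B r r = B s s) (hmod : r ≡ s [SMOD (k • ⊤ : Submodule ℤ V)]) :
    stableOrbit B r = stableOrbit B s := by
  obtain ⟨r', hr', hre⟩ := h.exists_mem_stableOrbit_pairing_eq hB hr hk
  obtain ⟨s', hs', hse⟩ := h.exists_mem_stableOrbit_pairing_eq hB hs hk
  have hmod' : r' ≡ s' [SMOD (k • ⊤ : Submodule ℤ V)] :=
    (hr.smodEq_of_mem_stableOrbit hk.ne' hr').trans
      (hmod.trans (hs.smodEq_of_mem_stableOrbit hk.ne' hs').symm)
  have hnorm' : B r' r' = B s' s' := by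
    rw [norm_eq_of_mem_stableOrbit hr', norm_eq_of_mem_stableOrbit hs', hnorm]
  have hrs := mem_stableOrbit_of_pairing_eq hB h.first.left_isotropic hk.ne' hre hse hnorm' hmod'
  rw [← stableOrbit_eq_iff.2 hr', ← stableOrbit_eq_iff.2 hs', stableOrbit_eq_iff.2 hrs]

end Reduction

section SquareRootsOfOne

/-- The number of square roots of `1` in `ZMod n`. -/
noncomputable def numSqrtsOne (n : ℕ) : ℕ :=
  {c : ZMod n | c ^ 2 = 1}.ncard

theorem intCast_sq_eq_one_iff (n : ℕ) (c : ℤ) : (c : ZMod n) ^ 2 = 1 ↔ (n : ℤ) ∣ c ^ 2 - 1 := by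
  rw [← ZMod.intCast_zmod_eq_zero_iff_dvd, Int.cast_sub, Int.cast_pow, Int.cast_one, sub_eq_zero]

theorem numSqrtsOne_mul {a b : ℕ} (h : a.Coprime b) :
    numSqrtsOne (a * b) = numSqrtsOne a * numSqrtsOne b := by
  let e := ZMod.chineseRemainder h
  have hpreimage : {c : ZMod (a * b) | c ^ 2 = 1} =
      e ⁻¹' ({c : ZMod a | c ^ 2 = 1} ×ˢ {c : ZMod b | c ^ 2 = 1}) := by
    ext c
    change c ^ 2 = 1 ↔ (e c).1 ^ 2 = 1 ∧ (e c).2 ^ 2 = 1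
    rw [← map_eq_one_iff e e.injective, map_pow, Prod.ext_iff]
    rfl
  rw [numSqrtsOne, hpreimage, Set.ncard_preimage_of_injective_subset_range e.injective
    (e.surjective.range_eq ▸ Set.subset_univ _), Set.ncard_prod]
  rfl

theorem numSqrtsOne_of_isCyclic (n : ℕ) [NeZero n] [IsCyclic (ZMod n)ˣ] :
    numSqrtsOne n = n.totient.gcd 2 := by
  have himage : {c : ZMod n | c ^ 2 = 1} =
      Units.val '' ((powMonoidHom 2 : (ZMod n)ˣ →* (ZMod n)ˣ).ker : Set (ZMod n)ˣ) := by
    ext c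
    refine ⟨fun hc => ⟨Units.ofPowEqOne c 2 hc two_ne_zero,
      Units.pow_ofPowEqOne hc two_ne_zero, rfl⟩, ?_⟩
    rintro ⟨u, hu, rfl⟩
    exact congrArg Units.val hu
  rw [numSqrtsOne, himage, Set.ncard_image_of_injective _ Units.val_injective,
    ← ZMod.card_units_eq_totient, ← Nat.card_eq_fintype_card, ← IsCyclic.card_powMonoidHom_ker]
  rfl

theorem numSqrtsOne_odd_prime_pow {p k : ℕ} (hp : p.Prime) (hp2 : p ≠ 2) (hk : k ≠ 0) :
    numSqrtsOne (p ^ k) = 2 := by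
  have : NeZero (p ^ k) := ⟨pow_ne_zero k hp.ne_zero⟩
  have := ZMod.isCyclic_units_of_prime_pow p hp hp2 k
  have hlt : 2 < p ^ k :=
    (lt_of_le_of_ne hp.two_le hp2.symm).trans_le (Nat.le_self_pow hk p)
  rw [numSqrtsOne_of_isCyclic, Nat.gcd_eq_right (Nat.totient_even hlt).two_dvd]

theorem numSqrtsOne_two : numSqrtsOne 2 = 1 := by
  have := ZMod.isCyclic_units_two
  rw [numSqrtsOne_of_isCyclic, Nat.totient_two, Nat.gcd_one_left]

theorem numSqrtsOne_four : numSqrtsOne 4 = 2 := by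
  have := ZMod.isCyclic_units_four
  rw [numSqrtsOne_of_isCyclic]
  decide

theorem two_pow_dvd_sq_sub_one_iff (k : ℕ) (c : ℤ) :
    2 ^ (k + 3) ∣ c ^ 2 - 1 ↔ 2 ^ (k + 2) ∣ c - 1 ∨ 2 ^ (k + 2) ∣ c + 1 := by
  constructor
  · intro h
    have hodd : ¬Even c := fun heven => by
      have : (2 : ℤ) ∣ 1 := (dvd_sub_right (heven.two_dvd.trans (dvd_pow_self c two_ne_zero))).1
        ((dvd_pow_self 2 (Nat.succ_ne_zero _)).trans h)
      norm_num at this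
    obtain ⟨b, rfl⟩ := Int.not_even_iff_odd.1 hodd
    have hb : (2 : ℤ) ^ (k + 1) ∣ b * (b + 1) :=
      (mul_dvd_mul_iff_left (four_ne_zero' ℤ)).1 (by ring_nf at h ⊢; exact h)
    rw [add_sub_cancel_right, show 2 * b + 1 + 1 = 2 * (b + 1) by ring, pow_succ' _ (k + 1)]
    refine Or.imp (mul_dvd_mul_left 2) (mul_dvd_mul_left 2) ?_
    rcases Int.even_or_odd b with heven | hodd
    · have hndvd : ¬(2 : ℤ) ∣ b + 1 := Int.two_dvd_ne_zero.2 (Int.odd_iff.1 heven.add_one)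
      exact .inl (Int.prime_two.pow_dvd_of_dvd_mul_right _ hndvd hb)
    · have hndvd : ¬(2 : ℤ) ∣ b := Int.two_dvd_ne_zero.2 (Int.odd_iff.1 hodd)
      exact .inr (Int.prime_two.pow_dvd_of_dvd_mul_left _ hndvd hb)
  · rintro (⟨q, hq⟩ | ⟨q, hq⟩)
    · exact ⟨q * (1 + 2 ^ (k + 1) * q), by rw [eq_add_of_sub_eq hq]; ring⟩
    · exact ⟨q * (2 ^ (k + 1) * q - 1), by rw [eq_sub_of_add_eq hq]; ring⟩

theorem lt_two_mul_and_dvd_iff {h x : ℕ} (hh : 2 < h) :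
    x < 2 * h ∧ ((h : ℤ) ∣ x - 1 ∨ (h : ℤ) ∣ x + 1) ↔
      x ∈ ({1, h - 1, h + 1, 2 * h - 1} : Finset ℕ) := by
  simp only [Finset.mem_insert, Finset.mem_singleton]
  constructor
  · rintro ⟨hx, ⟨q, hq⟩ | ⟨q, hq⟩⟩
    · have hq0 : -1 < q := by by_contra! hneg; nlinarith
      have hq2 : q < 2 := by by_contra! hge; nlinarith
      interval_cases q <;> lia
    · have hq0 : 0 < q := by by_contra! hneg; nlinarith
      have hq3 : q < 3 := by by_contra! hge; nlinarith
      interval_cases q <;> lia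
  · rintro (rfl | rfl | rfl | rfl)
    · exact ⟨by lia, .inl ⟨0, by lia⟩⟩
    · exact ⟨by lia, .inr ⟨1, by lia⟩⟩
    · exact ⟨by lia, .inl ⟨1, by lia⟩⟩
    · exact ⟨by lia, .inr ⟨2, by lia⟩⟩

theorem numSqrtsOne_two_pow (k : ℕ) : numSqrtsOne (2 ^ (k + 3)) = 4 := by
  set h : ℕ := 2 ^ (k + 2) with hh
  have hh2 : 2 < h :=
    lt_of_lt_of_le (by norm_num) (Nat.pow_le_pow_right two_pos (Nat.le_add_left 2 k))
  have hval : ZMod.val '' {c : ZMod (2 ^ (k + 3)) | c ^ 2 = 1} =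
      ({1, h - 1, h + 1, 2 * h - 1} : Finset ℕ) := by
    ext x
    have hsq : (x : ZMod (2 ^ (k + 3))) ^ 2 = 1 ↔ (h : ℤ) ∣ x - 1 ∨ (h : ℤ) ∣ x + 1 := by
      simpa [hh, two_pow_dvd_sq_sub_one_iff] using intCast_sq_eq_one_iff (2 ^ (k + 3)) x
    rw [Finset.mem_coe, ← lt_two_mul_and_dvd_iff hh2, ← hsq, hh, ← pow_succ' 2 (k + 2)]
    refine ⟨?_, fun ⟨hx, hx1⟩ => ⟨x, hx1, ZMod.val_natCast_of_lt hx⟩⟩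
    rintro ⟨c, hc, rfl⟩
    exact ⟨c.val_lt, by rwa [ZMod.natCast_zmod_val]⟩
  rw [numSqrtsOne, ← Set.ncard_image_of_injective _ (ZMod.val_injective _), hval,
    Set.ncard_coe_finset]
  repeat
    rw [Finset.card_insert_of_notMem (by
      simp only [Finset.mem_insert, Finset.mem_singleton]; lia)]
  rfl

theorem numSqrtsOne_odd {n : ℕ} (hn : Odd n) : numSqrtsOne n = 2 ^ n.primeFactors.card := by
  induction n using Nat.recOnPosPrimePosCoprime with
  | zero => exact absurd hn Nat.not_odd_zero
  | one =>
    have := ZMod.isCyclic_units_one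
    rw [numSqrtsOne_of_isCyclic, Nat.totient_one, Nat.gcd_one_left, Nat.primeFactors_one,
      Finset.card_empty, pow_zero]
  | prime_pow p k hp hk =>
    have hp2 : p ≠ 2 := by
      rintro rfl
      exact absurd ((Nat.odd_pow_iff hk.ne').1 hn) (by decide)
    rw [numSqrtsOne_odd_prime_pow hp hp2 hk.ne', Nat.primeFactors_prime_pow hk.ne' hp,
      Finset.card_singleton, pow_one]
  | coprime a b _ _ hab iha ihb =>
    obtain ⟨ha, hb⟩ := Nat.odd_mul.1 hn
    rw [numSqrtsOne_mul hab, iha ha, ihb hb, hab.primeFactors_mul,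
      Finset.card_union_of_disjoint hab.disjoint_primeFactors, pow_add]

theorem coprime_two_pow_of_odd (k : ℕ) {n : ℕ} (hn : Odd n) : (2 ^ k).Coprime n :=
  (Nat.coprime_two_left.2 hn).pow_left k

theorem numSqrtsOne_two_pow_mul (k : ℕ) {n : ℕ} (hn : Odd n) :
    numSqrtsOne (2 ^ k * n) = numSqrtsOne (2 ^ k) * 2 ^ n.primeFactors.card := by
  rw [numSqrtsOne_mul (coprime_two_pow_of_odd k hn), numSqrtsOne_odd hn]

theorem card_primeFactors_two_pow_mul {k n : ℕ} (hk : k ≠ 0) (hn : Odd n) :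
    (2 ^ k * n).primeFactors.card = n.primeFactors.card + 1 := by
  have hcop := coprime_two_pow_of_odd k hn
  rw [hcop.primeFactors_mul, Finset.card_union_of_disjoint hcop.disjoint_primeFactors,
    Nat.primeFactors_prime_pow hk Nat.prime_two, Finset.card_singleton, add_comm]

theorem numSqrtsOne_eq {n : ℕ} (hn : n ≠ 0) :
    (Odd n ∨ n % 8 = 4 → numSqrtsOne n = 2 ^ n.primeFactors.card) ∧
    (n % 8 = 0 → numSqrtsOne n = 2 ^ (n.primeFactors.card + 1)) ∧
    (n % 4 = 2 → numSqrtsOne n = 2 ^ (n.primeFactors.card - 1)) := by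
  obtain ⟨k, o, ho, rfl⟩ := Nat.exists_eq_two_pow_mul_odd hn
  have ho2 : o % 2 = 1 := Nat.odd_iff.1 ho
  rw [Nat.odd_iff]
  rcases k with _ | _ | _ | k
  · rw [pow_zero, one_mul]
    exact ⟨fun _ => numSqrtsOne_odd ho, by lia, by lia⟩
  · rw [numSqrtsOne_two_pow_mul _ ho, card_primeFactors_two_pow_mul (by lia) ho, zero_add, pow_one,
      numSqrtsOne_two, one_mul]
    exact ⟨by lia, by lia, fun _ => rfl⟩
  · rw [numSqrtsOne_two_pow_mul _ ho, card_primeFactors_two_pow_mul (by lia) ho, zero_add,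
      one_add_one_eq_two, show (2 : ℕ) ^ 2 = 4 from rfl, numSqrtsOne_four]
    exact ⟨fun _ => (pow_succ' _ _).symm, by lia, by lia⟩
  · have h8 : 2 ^ (k + 3) * o = 8 * (2 ^ k * o) := by ring
    rw [numSqrtsOne_two_pow_mul _ ho, card_primeFactors_two_pow_mul (by lia) ho,
      numSqrtsOne_two_pow, h8]
    exact ⟨by lia, fun _ => by ring, by lia⟩

end SquareRootsOfOne

section Classification

variable {V : Type*} [AddCommGroup V] {B : BilinForm ℤ V}

/-- The lattice is `K ⊕ ℤh` with `(h, h) = -2d` and `K` unimodular, and `φ` is the coordinate along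
`h`. Unimodularity of `K` is stated through its consequence that a vector `x` whose pairings are all
divisible by `N` is congruent to `φ x • h` modulo `N`. -/
structure IsUnimodularSplitting (B : BilinForm ℤ V) (d : ℕ) (h : V) (φ : V →ₗ[ℤ] ℤ) : Prop where
  pairing : ∀ x, B h x = -(2 * d) * φ x
  coord_self : φ h = 1
  smodEq : ∀ (N : ℤ) (x : V), (∀ l, N ∣ B x l) → x ≡ φ x • h [SMOD (N • ⊤ : Submodule ℤ V)]

/-- The vectors of norm `-2d` and divisor `d`. -/
def minusTwoDVectors (B : BilinForm ℤ V) (d : ℕ) : Set V :=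
  {r | B r r = -(2 * d) ∧ IsDivisor B r d}

theorem card_image_eq_card_image_of_eq_iff {α β γ : Type*} {S : Set α} {f : α → β} {g : α → γ}
    (h : ∀ x ∈ S, ∀ y ∈ S, f x = f y ↔ g x = g y) : Nat.card (f '' S) = Nat.card (g '' S) := by
  have hker : Setoid.ker (S.domRestrict f) = Setoid.ker (S.domRestrict g) :=
    Setoid.ext fun x y => h x x.2 y y.2
  rw [← Set.range_domRestrict f, ← Set.range_domRestrict g,
    ← Nat.card_congr (Setoid.quotientKerEquivRange (S.domRestrict f)), hker,
    Nat.card_congr (Setoid.quotientKerEquivRange (S.domRestrict g))]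

namespace IsUnimodularSplitting

variable {d : ℕ} {h : V} {φ : V →ₗ[ℤ] ℤ} (hs : IsUnimodularSplitting B d h φ)
include hs

theorem coord_sq_eq_one (hB : IsEvenForm B) (hd : d ≠ 0) {r : V} (hr : r ∈ minusTwoDVectors B d) :
    (φ r : ZMod d) ^ 2 = 1 := by
  obtain ⟨v, hv⟩ := smodEq_smul_top_iff.1 (hs.smodEq d r hr.2.dvd)
  have hnorm : B r r = (φ r) ^ 2 * -(2 * d) + 2 * (φ r * d * (-(2 * d) * φ v)) + d ^ 2 * B v v := by
    conv_lhs => rw [hv]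
    simp only [map_add, map_smul, LinearMap.add_apply, LinearMap.smul_apply, smul_eq_mul,
      hB.comm v h, hs.pairing, hs.coord_self]
    ring
  rw [hr.1, ← hB.two_mul_half v] at hnorm
  have hd' : (2 * d : ℤ) ≠ 0 := by positivity
  exact (intCast_sq_eq_one_iff d (φ r)).2
    ⟨B v v / 2 - 2 * φ r * φ v, mul_left_cancel₀ hd' (by linear_combination hnorm)⟩

theorem exists_mem_minusTwoDVectors (hB : IsEvenForm B) {e f : V} (hef : IsHyperbolicPair B e f)
    (he : φ e = 0) (hf : φ f = 0) {c : ZMod d} (hc : c ^ 2 = 1) :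
    ∃ r ∈ minusTwoDVectors B d, (φ r : ZMod d) = c := by
  obtain ⟨c, rfl⟩ := ZMod.intCast_surjective c
  have hc_dvd : (d : ℤ) ∣ c ^ 2 - 1 := (intCast_sq_eq_one_iff d c).1 hc
  have hpair : ∀ l, B ((d : ℤ) • e + (c ^ 2 - 1) • f + c • h) l =
      d * B e l + (c ^ 2 - 1) * B f l + c * (-(2 * d) * φ l) := fun l => by
    simp only [map_add, map_smul, LinearMap.add_apply, LinearMap.smul_apply, smul_eq_mul,
      hs.pairing]
  have hφ : φ ((d : ℤ) • e + (c ^ 2 - 1) • f + c • h) = c := by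
    simp only [map_add, map_smul, he, hf, hs.coord_self, smul_eq_mul, mul_zero, zero_add, mul_one]
  refine ⟨(d : ℤ) • e + (c ^ 2 - 1) • f + c • h, ⟨?_, ?_, f, ?_⟩, by rw [hφ]⟩
  · rw [hpair, hφ]
    simp only [map_add, map_smul, smul_eq_mul, hef.left_isotropic, hef.right_isotropic,
      hef.pairing, (hef.swap hB).pairing, hB.comm _ h, hs.pairing, he, hf]
    ring
  · intro l
    rw [hpair]
    exact ((dvd_mul_right _ _).add (hc_dvd.mul_right _)).add ⟨-(2 * c * φ l), by ring⟩
  · rw [hpair, hef.right_isotropic, hef.pairing, hf]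
    ring

theorem stableOrbit_eq_iff_coord_eq (hB : IsEvenForm B) (hd : d ≠ 0) {e₁ f₁ e₂ f₂ : V}
    (hp : IsTwoHyperbolicPlanes B e₁ f₁ e₂ f₂) {r s : V} (hr : r ∈ minusTwoDVectors B d)
    (hs' : s ∈ minusTwoDVectors B d) :
    stableOrbit B r = stableOrbit B s ↔ (φ r : ZMod d) = φ s := by
  have hd' : (0 : ℤ) < d := by positivity
  refine ⟨fun heq => ?_, fun heq => ?_⟩
  · have hrs := hs'.2.smodEq_of_mem_stableOrbit hd'.ne' (stableOrbit_eq_iff.1 heq)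
    obtain ⟨v, rfl⟩ := smodEq_smul_top_iff.1 hrs
    simp
  · obtain ⟨q, hq⟩ := (ZMod.intCast_eq_intCast_iff_dvd_sub _ _ _).1 heq.symm
    refine hp.eichler_criterion hB hd' hr.2 hs'.2 (hr.1.trans hs'.1.symm) ?_
    refine (hs.smodEq d r hr.2.dvd).trans (SModEq.trans ?_ (hs.smodEq d s hs'.2.dvd).symm)
    refine smodEq_smul_top_iff.2 ⟨q • h, ?_⟩
    rw [smul_smul, ← hq, ← add_smul, add_sub_cancel]

theorem card_orbits (hB : IsEvenForm B) (hd : d ≠ 0) {e₁ f₁ e₂ f₂ : V}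
    (hp : IsTwoHyperbolicPlanes B e₁ f₁ e₂ f₂) (he : φ e₁ = 0) (hf : φ f₁ = 0) :
    Nat.card (stableOrbit B '' minusTwoDVectors B d) = numSqrtsOne d := by
  rw [card_image_eq_card_image_of_eq_iff (g := fun r => (φ r : ZMod d)) fun r hr s hs' =>
    hs.stableOrbit_eq_iff_coord_eq hB hd hp hr hs']
  rw [Nat.card_coe_set_eq]
  refine congrArg Set.ncard (Set.Subset.antisymm ?_ ?_)
  · rintro _ ⟨r, hr, rfl⟩
    exact hs.coord_sq_eq_one hB hd hr
  · exact fun c hc => hs.exists_mem_minusTwoDVectors hB hp.first he hf hc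

theorem isUnit_of_eq_smul (hB : IsEvenForm B) (hd : d ≠ 0) {r x : V} {k : ℤ}
    (hr : r ∈ minusTwoDVectors B d) (hx : r = k • x) : IsUnit k := by
  obtain ⟨l, hl⟩ := hr.2.exists_eq
  have hk_div : k ∣ d := ⟨B x l, by rw [← hl, hx, map_smul]; rfl⟩
  have hk_coord : k ∣ φ r := ⟨φ x, by rw [hx, map_smul, smul_eq_mul]⟩
  have hsq : (d : ℤ) ∣ φ r ^ 2 - 1 :=
    (intCast_sq_eq_one_iff d (φ r)).1 (hs.coord_sq_eq_one hB hd hr)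
  exact isUnit_of_dvd_one <|
    (dvd_sub_right (hk_coord.trans (dvd_pow_self _ two_ne_zero))).1 (hk_div.trans hsq)

end IsUnimodularSplitting

end Classification

section GramMatrix

variable {ι : Type} [Fintype ι] [DecidableEq ι] {G : Matrix ι ι ℤ}

theorem bilin_eq_toBilin' (G : Matrix ι ι ℤ) (x y : ι → ℤ) : bilin G x y = G.toBilin' x y :=
  (Matrix.toBilin'_apply G x y).symm

theorem bilinQ_smul_castV (G : Matrix ι ι ℤ) (c : ℚ) (x y : ι → ℤ) :
    bilinQ G (c • castV x) (castV y) = c * G.toBilin' x y := by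
  simp only [bilinQ, castV, Pi.smul_apply, smul_eq_mul, Matrix.toBilin'_apply, Int.cast_sum,
    Int.cast_mul, Finset.mul_sum, mul_assoc]

theorem inStableO_iff_mem_stableOrthogonalGroup {g : (ι → ℤ) ≃ₗ[ℤ] (ι → ℤ)} :
    InStableO G g ↔ g ∈ stableOrthogonalGroup G.toBilin' := by
  refine and_congr (by simp only [bilin_eq_toBilin'])
    ⟨fun hg N x hN hx => ?_, fun hg y hy N x hyx => ?_⟩
  · have hN' : (N : ℚ) ≠ 0 := Int.cast_ne_zero.2 hN
    obtain ⟨v, hv⟩ := hg ((N : ℚ)⁻¹ • castV x) (fun l => by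
      obtain ⟨a, ha⟩ := hx l
      refine ⟨a, ?_⟩
      rw [bilinQ_smul_castV, ha, Int.cast_mul, inv_mul_cancel_left₀ hN']) N x
      (smul_inv_smul₀ hN' _)
    exact smodEq_smul_top_iff.2 ⟨v, eq_add_of_sub_eq' hv⟩
  · obtain rfl | hN := eq_or_ne N 0
    · have hx : x = 0 := funext fun i => by
        simpa [castV] using (congrFun hyx i).symm
      exact ⟨0, by rw [hx, map_zero, sub_zero, smul_zero]⟩
    · have hN' : (N : ℚ) ≠ 0 := Int.cast_ne_zero.2 hN
      have hdvd : ∀ l, N ∣ G.toBilin' x l := fun l => by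
        obtain ⟨a, ha⟩ := hy l
        rw [← inv_smul_smul₀ hN' y, hyx, bilinQ_smul_castV, inv_mul_eq_iff_eq_mul₀ hN'] at ha
        exact ⟨a, by exact_mod_cast ha⟩
      obtain ⟨v, hv⟩ := smodEq_smul_top_iff.1 (hg N x hN hdvd)
      exact ⟨v, sub_eq_of_eq_add' hv⟩

theorem stableOrbits_eq_image_stableOrbit (S : Set (ι → ℤ)) :
    stableOrbits G S = stableOrbit G.toBilin' '' S := by
  have horbit : ∀ r, {r' | ∃ g : (ι → ℤ) ≃ₗ[ℤ] (ι → ℤ), InStableO G g ∧ g r = r'} =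
      stableOrbit G.toBilin' r := fun r => Set.ext fun r' =>
    ⟨fun ⟨g, hg, hr⟩ => ⟨⟨g, inStableO_iff_mem_stableOrthogonalGroup.1 hg⟩, hr⟩,
      fun ⟨g, hr⟩ => ⟨g.1, inStableO_iff_mem_stableOrthogonalGroup.2 g.2, hr⟩⟩
  simp only [stableOrbits, horbit, Set.image, @eq_comm _ _ (stableOrbit _ _)]

theorem isDivisorOf_iff {r : ι → ℤ} {k : ℤ} :
    IsDivisorOf G r k ↔ 0 < k ∧ IsDivisor G.toBilin' r k := by
  simp only [IsDivisorOf, bilin_eq_toBilin']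
  exact and_congr_right fun _ => ⟨fun h => ⟨h.1, h.2⟩, fun h => ⟨h.1, h.2⟩⟩

theorem isEvenForm_toBilin' (hG : G.IsSymm) (hdiag : ∀ i, Even (G i i)) :
    IsEvenForm G.toBilin' := by
  have hsymm : (G.toBilin').IsSymm := (Matrix.isSymm_toBilin'_iff_isSymm).2 hG
  refine ⟨hsymm, fun x => ?_⟩
  rw [← Finset.univ_sum_single x]
  refine Finset.sum_induction _ (fun y => Even (G.toBilin' y y)) (fun y z hy hz => ?_) ?_
    fun i _ => ?_
  · simp only [map_add, LinearMap.add_apply, hsymm.eq z y]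
    rw [add_assoc, ← add_assoc (G.toBilin' y z)]
    exact hy.add ((Even.add_self _).add hz)
  · rw [map_zero]
    exact Even.zero
  · rw [Matrix.toBilin'_apply', single_dotProduct, Matrix.mulVec_single]
    simp only [Pi.smul_apply, Matrix.col_apply, MulOpposite.smul_eq_mul_unop, MulOpposite.unop_op]
    exact ((hdiag i).mul_right _).mul_left _

theorem toBilin'_fromBlocks_apply {κ l : Type*} [Fintype κ] [DecidableEq κ] [Fintype l]
    [DecidableEq l] (A : Matrix κ κ ℤ) (D : Matrix l l ℤ) (x y : κ ⊕ l → ℤ) :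
    (Matrix.fromBlocks A 0 0 D).toBilin' x y =
      A.toBilin' (x ∘ Sum.inl) (y ∘ Sum.inl) + D.toBilin' (x ∘ Sum.inr) (y ∘ Sum.inr) := by
  simp [Matrix.toBilin'_apply, Fintype.sum_sum_type]

theorem dvd_of_forall_dvd_toBilin' (hG : IsUnit G.det) {N : ℤ} {z : ι → ℤ}
    (hz : ∀ l, N ∣ G.toBilin' z l) (i : ι) : N ∣ z i := by
  have hi := hz (G⁻¹.mulVec (Pi.single i 1))
  rwa [Matrix.toBilin'_apply', Matrix.mulVec_mulVec, Matrix.mul_nonsing_inv G hG,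
    Matrix.one_mulVec, dotProduct_single, mul_one] at hi

end GramMatrix

section OrthogonalSum

variable {κ : Type} [Fintype κ] [DecidableEq κ] {A : Matrix κ κ ℤ} {d : ℕ}

/-- The Gram matrix of `K ⊕ ⟨-2d⟩`, where `A` is the Gram matrix of `K`. -/
def gramAddMinusTwoD (A : Matrix κ κ ℤ) (d : ℕ) : Matrix (κ ⊕ Fin 1) (κ ⊕ Fin 1) ℤ :=
  Matrix.fromBlocks A 0 0 !![-(2 * (d : ℤ))]

theorem toBilin'_gramAddMinusTwoD_apply (x y : κ ⊕ Fin 1 → ℤ) :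
    (gramAddMinusTwoD A d).toBilin' x y =
      A.toBilin' (x ∘ Sum.inl) (y ∘ Sum.inl) - 2 * d * (x (Sum.inr 0) * y (Sum.inr 0)) := by
  rw [gramAddMinusTwoD, toBilin'_fromBlocks_apply, Matrix.toBilin'_apply !![_]]
  simp only [Finset.univ_unique, Fin.default_eq_zero, Finset.sum_singleton, Matrix.of_apply,
    Matrix.cons_val_fin_one, Function.comp_apply]
  ring

theorem isEvenForm_gramAddMinusTwoD (hA : A.IsSymm) (hdiag : ∀ i, Even (A i i)) :
    IsEvenForm (gramAddMinusTwoD A d).toBilin' := by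
  refine isEvenForm_toBilin' (hA.fromBlocks Matrix.transpose_zero (Matrix.IsSymm.ext ?_)) ?_
  · intro i j
    rw [Subsingleton.elim i j]
  · rintro (i | i)
    · exact hdiag i
    · refine ⟨-d, ?_⟩
      simp only [gramAddMinusTwoD, Matrix.fromBlocks_apply₂₂, Matrix.of_apply, Matrix.cons_val',
        Matrix.cons_val_fin_one]
      ring

theorem isUnimodularSplitting_gramAddMinusTwoD (hA : IsUnit A.det) :
    IsUnimodularSplitting (gramAddMinusTwoD A d).toBilin' d (Sum.elim 0 1)
      (LinearMap.proj (Sum.inr 0)) where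
  pairing x := by
    simp [toBilin'_gramAddMinusTwoD_apply]
  coord_self := rfl
  smodEq N x hx := by
    have hdvd : ∀ i, N ∣ x (Sum.inl i) := dvd_of_forall_dvd_toBilin' hA fun l => by
      simpa [toBilin'_gramAddMinusTwoD_apply, Function.comp_def] using hx (Sum.elim l 0)
    choose v hv using hdvd
    refine smodEq_smul_top_iff.2 ⟨Sum.elim v 0, funext ?_⟩
    rintro (i | i)
    · simp [hv]
    · simp [Subsingleton.elim i 0]

theorem toBilin'_gramAddMinusTwoD_elim_zero (x y : κ → ℤ) :
    (gramAddMinusTwoD A d).toBilin' (Sum.elim x 0) (Sum.elim y 0) = A.toBilin' x y := by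
  simp [toBilin'_gramAddMinusTwoD_apply]

theorem IsTwoHyperbolicPlanes.gramAddMinusTwoD {e₁ f₁ e₂ f₂ : κ → ℤ}
    (h : IsTwoHyperbolicPlanes A.toBilin' e₁ f₁ e₂ f₂) :
    IsTwoHyperbolicPlanes (gramAddMinusTwoD A d).toBilin' (Sum.elim e₁ 0) (Sum.elim f₁ 0)
      (Sum.elim e₂ 0) (Sum.elim f₂ 0) := by
  obtain ⟨⟨_, _, _⟩, ⟨_, _, _⟩, _, _, _, _⟩ := h
  refine ⟨⟨?_, ?_, ?_⟩, ⟨?_, ?_, ?_⟩, ?_, ?_, ?_, ?_⟩ <;>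
    rwa [toBilin'_gramAddMinusTwoD_elim_zero]

theorem primitive_minusTwoD_divisor_vectors_eq (hA : A.IsSymm) (hdiag : ∀ i, Even (A i i))
    (hdet : IsUnit A.det) (hd : 0 < d) :
    {r | IsPrim r ∧ bilin (gramAddMinusTwoD A d) r r = -(2 * (d : ℤ)) ∧
      IsDivisorOf (gramAddMinusTwoD A d) r d} =
      minusTwoDVectors (gramAddMinusTwoD A d).toBilin' d := by
  have hd' : (0 : ℤ) < d := Int.natCast_pos.2 hd
  ext r
  simp only [Set.mem_ofPred_eq, minusTwoDVectors, bilin_eq_toBilin', isDivisorOf_iff, hd', true_and,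
    and_iff_right_iff_imp]
  exact fun hr k x => (isUnimodularSplitting_gramAddMinusTwoD hdet).isUnit_of_eq_smul
    (isEvenForm_gramAddMinusTwoD hA hdiag) hd.ne' hr

end OrthogonalSum

section EvenUnimodular

open scoped Kronecker

theorem gramE8copies_eq_kronecker (m : ℕ) :
    gramE8copies m = (1 : Matrix (Fin m) (Fin m) ℤ) ⊗ₖ gramE8neg := by
  ext p q
  simp [gramE8copies, Matrix.one_apply]

theorem isSymm_gramII (m : ℕ) : (gramII m).IsSymm := by
  have hU : gramU.IsSymm := by decide
  have hE : (gramE8copies m).IsSymm := by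
    rw [gramE8copies_eq_kronecker, Matrix.IsSymm, ← Matrix.kroneckerMap_transpose,
      Matrix.transpose_one, gramE8neg, Matrix.transpose_neg, CartanMatrix.E₈_transpose]
  exact (hU.fromBlocks Matrix.transpose_zero hU).fromBlocks Matrix.transpose_zero hE

theorem even_gramII_diag (m : ℕ) : ∀ i, Even (gramII m i i) := by
  have hU : ∀ i, Even (gramU i i) := by decide
  rintro ((i | i) | i)
  · exact hU i
  · exact hU i
  · have hE : gramII m (.inr i) (.inr i) = -2 := by
      simp [gramII, gramE8copies, gramE8neg]
    rw [hE]
    decide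

theorem isUnit_det_gramII (m : ℕ) : IsUnit (gramII m).det := by
  have hE : gramE8neg.det = 1 := by
    rw [gramE8neg, Matrix.det_neg, CartanMatrix.E₈_det]
    rfl
  rw [gramII, Matrix.det_fromBlocks_zero₂₁, Matrix.det_fromBlocks_zero₂₁,
    gramE8copies_eq_kronecker, Matrix.det_kronecker, hE, gramU, Matrix.det_fin_two_of]
  simp

theorem isTwoHyperbolicPlanes_gramII (m : ℕ) :
    IsTwoHyperbolicPlanes (gramII m).toBilin' (Pi.single (.inl (.inl 0)) 1)
      (Pi.single (.inl (.inl 1)) 1) (Pi.single (.inl (.inr 0)) 1)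
      (Pi.single (.inl (.inr 1)) 1) := by
  refine ⟨⟨?_, ?_, ?_⟩, ⟨?_, ?_, ?_⟩, ?_, ?_, ?_, ?_⟩ <;>
  · rw [Matrix.toBilin'_single]
    rfl

end EvenUnimodular

theorem card_orbits_of_minus_two_d_vectors_divisor_d_general {κ : Type} [Fintype κ] [DecidableEq κ]
    {A : Matrix κ κ ℤ} (hA : A.IsSymm) (hdiag : ∀ i, Even (A i i)) (hdet : IsUnit A.det)
    {e₁ f₁ e₂ f₂ : κ → ℤ} (hp : IsTwoHyperbolicPlanes A.toBilin' e₁ f₁ e₂ f₂) {d : ℕ} (hd : 0 < d) :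
    ((Odd d ∨ d % 8 = 4) →
      Nat.card
        ↥(stableOrbits (gramAddMinusTwoD A d)
          {r | IsPrim r ∧ bilin (gramAddMinusTwoD A d) r r = -(2 * (d : ℤ)) ∧
            IsDivisorOf (gramAddMinusTwoD A d) r (d : ℤ)}) = 2 ^ d.primeFactors.card) ∧
    (d % 8 = 0 →
      Nat.card
        ↥(stableOrbits (gramAddMinusTwoD A d)
          {r | IsPrim r ∧ bilin (gramAddMinusTwoD A d) r r = -(2 * (d : ℤ)) ∧
            IsDivisorOf (gramAddMinusTwoD A d) r (d : ℤ)}) = 2 ^ (d.primeFactors.card + 1)) ∧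
    (d % 4 = 2 →
      Nat.card
        ↥(stableOrbits (gramAddMinusTwoD A d)
          {r | IsPrim r ∧ bilin (gramAddMinusTwoD A d) r r = -(2 * (d : ℤ)) ∧
            IsDivisorOf (gramAddMinusTwoD A d) r (d : ℤ)}) = 2 ^ (d.primeFactors.card - 1)) := by
  rw [stableOrbits_eq_image_stableOrbit, primitive_minusTwoD_divisor_vectors_eq hA hdiag hdet hd,
    (isUnimodularSplitting_gramAddMinusTwoD hdet).card_orbits
      (isEvenForm_gramAddMinusTwoD hA hdiag) hd.ne' hp.gramAddMinusTwoD rfl rfl]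
  exact numSqrtsOne_eq hd.ne'

/-- For `d > 1`, the number of orbits of `Õ(L_{2d}^{(m)})` on the set
of primitive vectors `r` with `(r,r) = −2d` and `div(r) = d` equals `2^{ρ(d)}` if `d` is
odd or `d ≡ 4 mod 8`, equals `2^{ρ(d)+1}` if `d ≡ 0 mod 8`, and equals `2^{ρ(d)−1}` if
`d ≡ 2 mod 4`, where `ρ(d)` is the number of distinct prime divisors of `d`. -/
theorem card_orbits_of_minus_two_d_vectors_divisor_d
    (m d : ℕ) (hd : 1 < d) :
    ((Odd d ∨ d % 8 = 4) →
      Nat.card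
        ↥(stableOrbits (gramL m d)
          {r | IsPrim r ∧ bilin (gramL m d) r r = -(2 * (d : ℤ)) ∧
            IsDivisorOf (gramL m d) r (d : ℤ)}) = 2 ^ d.primeFactors.card) ∧
    (d % 8 = 0 →
      Nat.card
        ↥(stableOrbits (gramL m d)
          {r | IsPrim r ∧ bilin (gramL m d) r r = -(2 * (d : ℤ)) ∧
            IsDivisorOf (gramL m d) r (d : ℤ)}) = 2 ^ (d.primeFactors.card + 1)) ∧
    (d % 4 = 2 →
      Nat.card
        ↥(stableOrbits (gramL m d)
          {r | IsPrim r ∧ bilin (gramL m d) r r = -(2 * (d : ℤ)) ∧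
            IsDivisorOf (gramL m d) r (d : ℤ)}) = 2 ^ (d.primeFactors.card - 1)) := by
  exact card_orbits_of_minus_two_d_vectors_divisor_d_general (isSymm_gramII m) (even_gramII_diag m)
    (isUnit_det_gramII m) (isTwoHyperbolicPlanes_gramII m) (Nat.zero_lt_of_lt hd)
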